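/- Let S be a finite set of affine functions ℝ → ℝ. Then the set of continuous functions f : [0,1] → ℝ that are piecewise along S is finite. -/

import Mathlib

/-- A function `f` on `[0,1]` is *piecewise along* a set `S` of functions `ℝ → ℝ`
if there are finitely many points `0 = t₀ < t₁ < ⋯ < t_k = 1` such that on each
subinterval `[t_{i-1}, t_i]` the function `f` coincides with some element of `S`. -/
def PiecewiseAlong (S : Set (ℝ → ℝ)) (f : Set.Icc (0 : ℝ) 1 → ℝ) : Prop :=
  ∃ (k : ℕ) (t : ℕ → ℝ), t 0 = 0 ∧ t k = 1 ∧ (∀ i, i < k → t i < t (i + 1)) ∧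
    ∀ i, i < k → ∃ g ∈ S, ∀ x : Set.Icc (0 : ℝ) 1,
      t i ≤ (x : ℝ) → (x : ℝ) ≤ t (i + 1) → f x = g (x : ℝ)

/-!
Two members of `S` whose coincidence set meets an interval `J` but has no frontier point in `J`
agree on all of `J`, by connectedness. Outside the finitely many frontier points, a function that
is piecewise along `S` therefore cannot switch between members of `S` that differ nearby: it stays
equal to one of them on each complementary interval. It is thus determined by its values at the
frontier points and at one sample point per complementary interval, and at each of these points it
takes one of at most `#S` values.
-/

open Set

section Preconnected

variable {X Y ι : Type*} [TopologicalSpace X] {J A : Set X} {f g : X → Y} {x : X}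

theorem subset_of_isPreconnected_of_disjoint_frontier (hJ : IsPreconnected J)
    (hJA : Disjoint J (frontier A)) (hne : (J ∩ A).Nonempty) : J ⊆ A := by
  have hcover : J ⊆ interior A ∪ interior Aᶜ :=
    compl_frontier_eq_union_interior (s := A) ▸ hJA.subset_compl_right
  have hdisj : Disjoint (interior A) (interior Aᶜ) :=
    disjoint_compl_right.mono interior_subset interior_subset
  obtain ⟨x, hx, hxA⟩ := hne
  have hxA' : x ∈ interior A := (hcover hx).resolve_right fun h ↦ interior_subset h hxA
  exact (hJ.subset_left_of_subset_union isOpen_interior isOpen_interior hdisj hcover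
    ⟨x, hx, hxA'⟩).trans interior_subset

theorem eqOn_of_finite_closed_cover [Finite ι] {C : ι → Set X} {u : ι → X → Y}
    (hJ : IsPreconnected J) (hC : ∀ i, IsClosed (C i)) (hcover : J ⊆ ⋃ i, C i)
    (hfu : ∀ i, EqOn f (u i) (C i)) (hug : ∀ i, ∀ y ∈ J, u i y = g y → EqOn (u i) g J)
    (hx : x ∈ J) (hfg : f x = g x) : EqOn f g J := by
  intro y hy
  by_contra hne
  -- The pieces on which `u i` agrees with `g` and the remaining ones form two disjoint closed
  -- subsets of `J`, which contain `x` and `y` respectively.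
  let I : Set ι := {i | EqOn (u i) g J}
  have isClosed_biUnion (K : Set ι) : IsClosed (⋃ i ∈ K, C i) :=
    K.toFinite.isClosed_biUnion fun i _ ↦ hC i
  have hJI : J ⊆ (⋃ i ∈ I, C i) ∪ ⋃ i ∈ Iᶜ, C i := by
    rwa [← biUnion_union, union_compl_self, biUnion_univ]
  have hxI : x ∈ ⋃ i ∈ I, C i := by
    obtain ⟨i, hi⟩ := mem_iUnion.1 (hcover hx)
    exact mem_biUnion (hug i x hx ((hfu i hi).symm.trans hfg)) hi
  have hyI : y ∈ ⋃ i ∈ Iᶜ, C i := by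
    obtain ⟨i, hi⟩ := mem_iUnion.1 (hcover hy)
    exact mem_biUnion (fun hiI : EqOn (u i) g J ↦ hne ((hfu i hi).trans (hiI hy))) hi
  obtain ⟨z, hz, hzI, hzI'⟩ := isPreconnected_closed_iff.1 hJ _ _ (isClosed_biUnion I)
    (isClosed_biUnion Iᶜ) hJI ⟨x, hx, hxI⟩ ⟨y, hy, hyI⟩
  obtain ⟨i, hi, hzi⟩ := mem_iUnion₂.1 hzI
  obtain ⟨j, hj, hzj⟩ := mem_iUnion₂.1 hzI'
  exact hj (hug j z hz (((hfu j hzj).symm.trans (hfu i hzi)).trans (hi hz)))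

end Preconnected

theorem finite_ordConnectedSection_compl {α : Type*} [LinearOrder α] {P : Set α}
    (hP : P.Finite) : (ordConnectedSection Pᶜ).Finite := by
  refine Finite.of_injOn (f := fun x ↦ P ∩ Iio x) (fun x _ ↦ inter_subset_left)
    (fun x hx y hy hxy ↦ ?_) hP.finite_subsets
  have lt_iff_lt {p : α} (hp : p ∈ P) : p < x ↔ p < y := by
    simpa [hp] using Set.ext_iff.1 hxy p
  refine eq_of_mem_ordConnectedSection_of_uIcc_subset hx hy fun p hp hpP ↦ ?_
  have hpx : p ≠ x := by
    rintro rfl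
    exact ordConnectedSection_subset hx hpP
  have hpy : p ≠ y := by
    rintro rfl
    exact ordConnectedSection_subset hy hpP
  rcases mem_uIcc.1 hp with ⟨hxp, hpy'⟩ | ⟨hyp, hpx'⟩
  · exact hxp.not_gt ((lt_iff_lt hpP).2 (hpy'.lt_of_ne hpy))
  · exact hyp.not_gt ((lt_iff_lt hpP).1 (hpx'.lt_of_ne hpx))

theorem finite_of_eqOn_imp_eq {X Y : Type*} {F : Set (X → Y)} {T : Set X} (hT : T.Finite)
    (hval : ∀ x ∈ T, ((fun f ↦ f x) '' F).Finite)
    (hdet : ∀ f₁ ∈ F, ∀ f₂ ∈ F, EqOn f₁ f₂ T → f₁ = f₂) : F.Finite := by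
  have : Finite T := hT
  have hpi : {v : T → Y | ∀ x : T, v x ∈ (fun f ↦ f x) '' F}.Finite :=
    Finite.pi' fun x ↦ hval x x.2
  refine Finite.of_injOn (f := T.domRestrict) ?_ ?_ hpi
  · exact fun f hf x ↦ mem_image_of_mem _ hf
  · exact fun f₁ hf₁ f₂ hf₂ h ↦ hdet f₁ hf₁ f₂ hf₂ (domRestrict_eq_domRestrict_iff.1 h)

theorem exists_lt_mem_Icc_succ {α : Type*} [LinearOrder α] {t : ℕ → α} {x : α} {k : ℕ}
    (hk : k ≠ 0) (h₀ : t 0 ≤ x) (h₁ : x ≤ t k) : ∃ i < k, x ∈ Icc (t i) (t (i + 1)) := by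
  induction k with
  | zero => exact absurd rfl hk
  | succ n ih =>
    rcases le_or_gt (t n) x with hn | hn
    · exact ⟨n, n.lt_succ_self, hn, h₁⟩
    · have hn₀ : n ≠ 0 := by
        rintro rfl
        exact hn.not_ge h₀
      obtain ⟨i, hi, hxi⟩ := ih hn₀ hn.le
      exact ⟨i, hi.trans n.lt_succ_self, hxi⟩

theorem subsingleton_setOf_affine_eq {R : Type*} [CommRing R] [NoZeroDivisors R] {b m c n : R}
    (hne : (fun t ↦ b + m * t) ≠ fun t ↦ c + n * t) :
    {t | b + m * t = c + n * t}.Subsingleton := by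
  intro x (hx : b + m * x = c + n * x) y (hy : b + m * y = c + n * y)
  by_contra hxy
  have hmul : (m - n) * (x - y) = 0 := by linear_combination hx - hy
  obtain rfl : m = n := sub_eq_zero.1 ((mul_eq_zero.1 hmul).resolve_right (sub_ne_zero.2 hxy))
  exact hne (by rw [add_right_cancel hx])

/-- The switching points of `S`: the points of `[0,1]` on the frontier of the coincidence set of
two members of `S`. Only there can a function that is piecewise along `S` pass from one member
of `S` to another with different values nearby. -/
def switchPoints (S : Set (ℝ → ℝ)) : Set (Icc (0 : ℝ) 1) :=
  ⋃ g ∈ S, ⋃ h ∈ S, frontier {x : Icc (0 : ℝ) 1 | g x = h x}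

namespace PiecewiseAlong

variable {S : Set (ℝ → ℝ)} {f f₁ f₂ : Icc (0 : ℝ) 1 → ℝ}

theorem exists_finite_closed_cover (hf : PiecewiseAlong S f) :
    ∃ (k : ℕ) (C : Fin k → Set (Icc (0 : ℝ) 1)) (u : Fin k → ℝ → ℝ),
      (∀ i, IsClosed (C i)) ∧ ⋃ i, C i = univ ∧ ∀ i, u i ∈ S ∧ EqOn f (fun x ↦ u i x) (C i) := by
  obtain ⟨k, t, ht₀, ht₁, -, hpiece⟩ := hf
  choose u huS hfu using fun i : Fin k ↦ hpiece i i.2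
  have hk : k ≠ 0 := by
    rintro rfl
    exact zero_ne_one (ht₀.symm.trans ht₁)
  refine ⟨k, fun i ↦ (↑) ⁻¹' Icc (t i) (t (i + 1)), u,
    fun i ↦ isClosed_Icc.preimage continuous_subtype_val, eq_univ_of_forall fun x ↦ ?_,
    fun i ↦ ⟨huS i, fun x hx ↦ hfu i x hx.1 hx.2⟩⟩
  obtain ⟨i, hi, hxi⟩ := exists_lt_mem_Icc_succ hk (ht₀.trans_le x.2.1) (x.2.2.trans_eq ht₁.symm)
  exact mem_iUnion.2 ⟨⟨i, hi⟩, hxi⟩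

theorem exists_mem_eq (hf : PiecewiseAlong S f) (x : Icc (0 : ℝ) 1) : ∃ g ∈ S, g x = f x := by
  obtain ⟨k, C, u, -, hcover, hu⟩ := hf.exists_finite_closed_cover
  obtain ⟨i, hi⟩ := mem_iUnion.1 (hcover.ge (mem_univ x))
  exact ⟨u i, (hu i).1, ((hu i).2 hi).symm⟩

variable {J : Set (Icc (0 : ℝ) 1)} {x : Icc (0 : ℝ) 1}

theorem eqOn_mem_of_disjoint_switchPoints (hf : PiecewiseAlong S f) (hJ : IsPreconnected J)
    (hJS : Disjoint J (switchPoints S)) {g : ℝ → ℝ} (hg : g ∈ S) (hx : x ∈ J) (hfg : f x = g x) :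
    EqOn f (fun y ↦ g y) J := by
  obtain ⟨k, C, u, hC, hcover, hu⟩ := hf.exists_finite_closed_cover
  refine eqOn_of_finite_closed_cover hJ hC (hcover ▸ subset_univ J) (fun i ↦ (hu i).2)
    (fun i y hy hug ↦ ?_) hx hfg
  have hfr : frontier {z : Icc (0 : ℝ) 1 | u i z = g z} ⊆ switchPoints S :=
    fun z hz ↦ mem_biUnion (hu i).1 (mem_biUnion hg hz)
  exact subset_of_isPreconnected_of_disjoint_frontier hJ (hJS.mono_right hfr) ⟨y, hy, hug⟩

theorem eqOn_of_disjoint_switchPoints (hf₁ : PiecewiseAlong S f₁) (hf₂ : PiecewiseAlong S f₂)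
    (hJ : IsPreconnected J) (hJS : Disjoint J (switchPoints S)) (hx : x ∈ J) (h : f₁ x = f₂ x) :
    EqOn f₁ f₂ J := by
  obtain ⟨g, hg, hgx⟩ := hf₁.exists_mem_eq x
  have h₁ := hf₁.eqOn_mem_of_disjoint_switchPoints hJ hJS hg hx hgx.symm
  have h₂ := hf₂.eqOn_mem_of_disjoint_switchPoints hJ hJS hg hx (h.symm.trans hgx.symm)
  exact h₁.trans h₂.symm

theorem eq_of_eqOn_switchPoints_union (hf₁ : PiecewiseAlong S f₁) (hf₂ : PiecewiseAlong S f₂)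
    (h : EqOn f₁ f₂ (switchPoints S ∪ ordConnectedSection (switchPoints S)ᶜ)) : f₁ = f₂ := by
  ext x
  by_cases hx : x ∈ switchPoints S
  · exact h (Or.inl hx)
  · let y := ordConnectedProj (switchPoints S)ᶜ ⟨x, hx⟩
    have hJS : Disjoint (uIcc x y) (switchPoints S) := disjoint_left.2
      (ordConnectedProj_mem_ordConnectedComponent (switchPoints S)ᶜ ⟨x, hx⟩)
    exact hf₁.eqOn_of_disjoint_switchPoints hf₂ ordConnected_uIcc.isPreconnected hJS
      right_mem_uIcc (h (Or.inr (mem_range_self _))) left_mem_uIcc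

end PiecewiseAlong

theorem finite_frontier_setOf_affine_eq {g h : ℝ → ℝ} (hg : ∃ b m : ℝ, g = fun t ↦ b + m * t)
    (hh : ∃ b m : ℝ, h = fun t ↦ b + m * t) (s : Set ℝ) :
    (frontier {x : s | g x = h x}).Finite := by
  obtain ⟨b, m, rfl⟩ := hg
  obtain ⟨c, n, rfl⟩ := hh
  by_cases hne : (fun t ↦ b + m * t) = fun t ↦ c + n * t
  · simp only [congrFun hne, ofPred_true, frontier_univ, finite_empty]
  · have hfin : {x : s | b + m * x = c + n * x}.Finite :=
      ((subsingleton_setOf_affine_eq hne).preimage Subtype.val_injective).finite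
    exact hfin.subset hfin.isClosed.frontier_subset

theorem finite_of_piecewiseAlong_affine_general (S : Set (ℝ → ℝ)) (hS : S.Finite)
    (hfr : ∀ g ∈ S, ∀ h ∈ S, (frontier {x : Icc (0 : ℝ) 1 | g x = h x}).Finite) :
    {f : Icc (0 : ℝ) 1 → ℝ | PiecewiseAlong S f}.Finite := by
  have hP : (switchPoints S).Finite := hS.biUnion fun g hg ↦ hS.biUnion fun h hh ↦ hfr g hg h hh
  refine finite_of_eqOn_imp_eq (hP.union (finite_ordConnectedSection_compl hP)) ?_
    fun f₁ hf₁ f₂ hf₂ ↦ PiecewiseAlong.eq_of_eqOn_switchPoints_union hf₁ hf₂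
  rintro x -
  refine (hS.image fun g ↦ g x).subset ?_
  rintro _ ⟨f, hf, rfl⟩
  exact PiecewiseAlong.exists_mem_eq hf x

/-- If `S` is a finite set of affine functions `ℝ → ℝ`, then the set of continuous
functions `f : [0,1] → ℝ` that are piecewise along `S` is finite. -/
theorem finite_of_piecewiseAlong_affine (S : Set (ℝ → ℝ)) (hS : S.Finite)
    (haff : ∀ g ∈ S, ∃ b m : ℝ, g = fun t : ℝ => b + m * t) :
    {f : C(Set.Icc (0 : ℝ) 1, ℝ) | PiecewiseAlong S f}.Finite :=
  Finite.of_injOn (f := DFunLike.coe) (fun _ hf ↦ hf) DFunLike.coe_injective.injOn <|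
    finite_of_piecewiseAlong_affine_general S hS fun g hg h hh ↦
      finite_frontier_setOf_affine_eq (haff g hg) (haff h hh) _
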